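/- Let S = K[x_1,...,x_n], Q = (x_1,...,x_t), and Q' = (x_{r+1},...,x_n), where 1 ≤ r ≤ t < n. Then sdepth_S(Q ∩ Q') ≥ ⌈r/2⌉ + ⌈(n−t)/2⌉. -/

import Mathlib

open MvPolynomial

/-- The depth of a module `M` with respect to an ideal `I`: the supremum of
lengths of `M`-regular sequences with entries in `I`. -/
noncomputable def moduleDepth (R : Type*) [CommRing R] (I : Ideal R)
    (M : Type*) [AddCommGroup M] [Module R M] : ℕ :=
  sSup {k | ∃ rs : List R, rs.length = k ∧ (∀ r ∈ rs, r ∈ I) ∧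
    RingTheory.Sequence.IsRegular M rs}

/-- The Stanley space `u·K[Z]`: the `K`-span of all monomials `u·v` with
`v` a monomial in the variables of `Z`. -/
noncomputable def stanleySpace {n : ℕ} (K : Type*) [Field K] (d : Fin n →₀ ℕ)
    (Z : Finset (Fin n)) : Submodule K (MvPolynomial (Fin n) K) :=
  Submodule.span K {f | ∃ e : Fin n →₀ ℕ, (∀ i, e i ≠ 0 → i ∈ Z) ∧
    f = monomial (d + e) (1 : K)}

/-- A Stanley decomposition of a monomial ideal `I`: a finite family of Stanley
spaces `uᵢ·K[Zᵢ]`, with each `uᵢ ∈ I`, which are independent and whose (direct)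
sum is `I` as a `K`-vector space. -/
structure StanleyDecomp {n : ℕ} (K : Type*) [Field K]
    (I : Ideal (MvPolynomial (Fin n) K)) where
  m : ℕ
  u : Fin m → (Fin n →₀ ℕ)
  Z : Fin m → Finset (Fin n)
  mem : ∀ i, monomial (u i) (1 : K) ∈ I
  indep : iSupIndep fun i => stanleySpace K (u i) (Z i)
  total : (⨆ i, stanleySpace K (u i) (Z i)) = Submodule.restrictScalars K I

/-- The Stanley depth of a monomial ideal: the largest `k` such that `I` admits a
Stanley decomposition all of whose Stanley spaces use at least `k` variables. -/
noncomputable def sdepth {n : ℕ} {K : Type*} [Field K]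
    (I : Ideal (MvPolynomial (Fin n) K)) : ℕ :=
  sSup {k | ∃ D : StanleyDecomp K I, ∀ i, k ≤ (D.Z i).card}

/-- `I` is a monomial ideal if it is generated by monomials. -/
def IsMonomialIdeal {n : ℕ} {K : Type*} [Field K]
    (I : Ideal (MvPolynomial (Fin n) K)) : Prop :=
  ∃ G : Set (Fin n →₀ ℕ), I = Ideal.span ((fun d => monomial d (1 : K)) '' G)

/-- The monomial prime ideal generated by the variables in `A`. -/
noncomputable def varIdeal {n : ℕ} (K : Type*) [Field K] (A : Finset (Fin n)) :
    Ideal (MvPolynomial (Fin n) K) :=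
  Ideal.span ((fun i => (X i : MvPolynomial (Fin n) K)) '' ↑A)

/-- The graded maximal ideal `(x_1, …, x_n)`. -/
noncomputable def maxIdeal (n : ℕ) (K : Type*) [Field K] :
    Ideal (MvPolynomial (Fin n) K) :=
  varIdeal K Finset.univ

def stt (W : Finset ℕ) (b : Bool) : ℕ → Bool
  | 0 => b
  | y + 1 => if y ∈ W then y.bodd else stt W b y

def stb (W : Finset ℕ) (n : ℕ) : Bool := ! stt W false n
def stX (W : Finset ℕ) (n : ℕ) : Finset ℕ := W.filter fun y => y.bodd ≠ stt W (stb W n) y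
def stY (W : Finset ℕ) (n : ℕ) : Finset ℕ :=
  (Finset.range n).filter fun y => y.bodd = stt W (stb W n) (y + 1)

theorem stt_indep (W : Finset ℕ) (b c : Bool) (n : ℕ) (h : ∃ y ∈ W, y < n) :
    stt W b n = stt W c n := by
  induction n with
  | zero => simp at h
  | succ n ih =>
    simp only [stt]
    split_ifs with hn
    · rfl
    · apply ih
      obtain ⟨y, hy, hyn⟩ := h
      exact ⟨y, hy, by rcases Nat.lt_succ_iff_lt_or_eq.1 hyn with h | h; exact h; subst h; contradiction⟩

theorem stt_final (W : Finset ℕ) (n : ℕ) (hW : W ⊆ Finset.range n) (hne : W.Nonempty) :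
    stt W (stb W n) n = ! stb W n := by
  obtain ⟨y, hy⟩ := hne
  rw [stt_indep W (stb W n) false n ⟨y, hy, Finset.mem_range.1 (hW hy)⟩]
  simp [stb]

theorem stX_nonempty (W : Finset ℕ) (n : ℕ) (hW : W ⊆ Finset.range n) (hne : W.Nonempty) :
    (stX W n).Nonempty := by
  by_contra h
  rw [Finset.not_nonempty_iff_eq_empty, stX, Finset.filter_eq_empty_iff] at h
  have : ∀ y, stt W (stb W n) y = stb W n := by
    intro y
    induction y with
    | zero => rfl
    | succ y ih =>
      simp only [stt]
      split_ifs with hy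
      · have := h hy
        simp only [ne_eq, not_not] at this
        rw [this, ih]
      · exact ih
  have h2 := stt_final W n hW hne
  rw [this] at h2
  simp at h2

theorem stX_sub (W : Finset ℕ) (n : ℕ) : stX W n ⊆ W := Finset.filter_subset _ _
theorem stY_sub (W : Finset ℕ) (n : ℕ) : stY W n ⊆ Finset.range n := Finset.filter_subset _ _
theorem sub_stY (W : Finset ℕ) (n : ℕ) (hW : W ⊆ Finset.range n) : W ⊆ stY W n := by
  intro y hy
  exact Finset.mem_filter.2 ⟨hW hy, by simp [stt, hy]⟩

theorem st_interval (W W' : Finset ℕ) (n : ℕ) (hW : W ⊆ Finset.range n) (hne : W.Nonempty)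
    (h1 : stX W n ⊆ W') (h2 : W' ⊆ stY W n) : stX W' n = stX W n ∧ stY W' n = stY W n := by
  have key : ∀ y, stt W' (stb W n) y = stt W (stb W n) y := by
    intro y
    induction y with
    | zero => rfl
    | succ y ih =>
      by_cases hy : y ∈ W'
      · have := (Finset.mem_filter.1 (h2 hy)).2
        rw [← this]; simp [stt, hy]
      · have h3 : y ∉ stX W n := fun h => hy (h1 h)
        simp only [stX, Finset.mem_filter, not_and, ne_eq, not_not] at h3
        simp only [stt, hy, if_false, ih]
        split_ifs with h4
        · exact (h3 h4).symm
        · rfl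
  have hW' : W' ⊆ Finset.range n := h2.trans (stY_sub W n)
  obtain ⟨x, hx⟩ := stX_nonempty W n hW hne
  have hb : stb W' n = stb W n := by
    have e1 := stt_indep W' false (stb W n) n ⟨x, h1 hx, Finset.mem_range.1 (hW' (h1 hx))⟩
    have e2 := stt_final W n hW hne
    rw [stb, e1, key, e2]; simp
  constructor
  · ext y
    simp only [stX, Finset.mem_filter, hb, key]
    constructor
    · rintro ⟨a, b⟩
      refine ⟨?_, b⟩
      have := (Finset.mem_filter.1 (h2 a)).2
      by_contra hy
      simp only [stt, hy, if_false] at this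
      exact b this
    · rintro ⟨a, b⟩
      exact ⟨h1 (by simp only [stX, Finset.mem_filter]; exact ⟨a, b⟩), b⟩
  · simp only [stY, hb, key]

theorem card_aux (Y : Finset ℕ) (n : ℕ) (h : ∀ y, y + 1 < n + 1 → y ∈ Y ∨ y + 1 ∈ Y) :
    n + 1 + (if 0 ∈ Y then 1 else 0) + (if n ∈ Y then 1 else 0) ≤
      2 * ((Finset.range (n + 1)).filter (· ∈ Y)).card + 1 := by
  induction n with
  | zero => by_cases h0 : 0 ∈ Y <;> simp [h0, Finset.filter_singleton]
  | succ n ih =>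
    have := ih (fun y hy => h y (by omega))
    rw [Finset.range_add_one, Finset.filter_insert]
    have h3 := h n (by omega)
    by_cases h4 : n + 1 ∈ Y
    · simp only [h4, if_true]
      rw [Finset.card_insert_of_notMem (by simp)]
      split_ifs at * <;> omega
    · have h5 : n ∈ Y := by tauto
      simp only [h4, h5, if_true, if_false] at *
      omega

theorem stY_card (W : Finset ℕ) (n : ℕ) (hW : W ⊆ Finset.range n) (hne : W.Nonempty) :
    (n + 1) / 2 ≤ (stY W n).card := by
  obtain ⟨m, rfl⟩ : ∃ m, n = m + 1 := by
    obtain ⟨y, hy⟩ := hne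
    have := Finset.mem_range.1 (hW hy)
    exact ⟨n - 1, by omega⟩
  have hmem : ∀ y, y ∈ stY W (m+1) ↔ y < m + 1 ∧ y.bodd = stt W (stb W (m+1)) (y + 1) := by
    intro y; simp [stY]
  have h := card_aux (stY W (m+1)) m (by
    intro y hy
    by_contra hc
    simp only [hmem, not_or, hy, true_and, show y < m + 1 by omega] at hc
    obtain ⟨c1, c2⟩ := hc
    rw [stt] at c2
    split_ifs at c2 with h3
    · exact c2 rfl
    · rw [Nat.bodd_succ] at c2
      revert c1 c2
      cases y.bodd <;> cases stt W (stb W (m+1)) (y+1) <;> simp)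
  have e : (Finset.range (m + 1)).filter (· ∈ stY W (m+1)) = stY W (m+1) := by
    ext y; simp [hmem]
  rw [e] at h
  have hend : m.bodd = false → 0 ∈ stY W (m+1) ∨ m ∈ stY W (m+1) := by
    intro hm
    by_contra hc
    simp only [hmem, not_or, true_and, show 0 < m + 1 by omega, show m < m + 1 by omega, hm] at hc
    obtain ⟨c1, c2⟩ := hc
    rw [stt_final W (m+1) hW hne] at c2
    simp only [stt] at c1
    split_ifs at c1 with h3
    · exact c1 rfl
    · revert c1 c2
      simp
  rcases Nat.even_or_odd' m with ⟨k, rfl | rfl⟩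
  · have := hend (by simp)
    rcases this with h5 | h5 <;> simp only [h5, if_true] at h <;> omega
  · omega

/-- Interval partition of nonempty subsets of `V`. -/
theorem interval_range (n : ℕ) : ∃ P : Finset (Finset ℕ × Finset ℕ),
    (∀ p ∈ P, p.1 ⊆ p.2 ∧ p.2 ⊆ Finset.range n ∧ p.1.Nonempty ∧ (n + 1) / 2 ≤ p.2.card) ∧
    ∀ W ⊆ Finset.range n, W.Nonempty → ∃! p, p ∈ P ∧ p.1 ⊆ W ∧ W ⊆ p.2 := by
  classical
  refine ⟨((Finset.range n).powerset.filter Finset.Nonempty).image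
    fun W => (stX W n, stY W n), ?_, ?_⟩
  · intro p hp
    simp only [Finset.mem_image, Finset.mem_filter, Finset.mem_powerset] at hp
    obtain ⟨W, ⟨hW, hne⟩, rfl⟩ := hp
    exact ⟨(stX_sub W n).trans (sub_stY W n hW), stY_sub W n, stX_nonempty W n hW hne,
      stY_card W n hW hne⟩
  · intro W hW hne
    refine ⟨(stX W n, stY W n), ⟨?_, stX_sub W n, sub_stY W n hW⟩, ?_⟩
    · simp only [Finset.mem_image, Finset.mem_filter, Finset.mem_powerset]
      exact ⟨W, ⟨hW, hne⟩, rfl⟩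
    · rintro p ⟨hp, h1, h2⟩
      simp only [Finset.mem_image, Finset.mem_filter, Finset.mem_powerset] at hp
      obtain ⟨W', ⟨hW', hne'⟩, rfl⟩ := hp
      obtain ⟨a, b⟩ := st_interval W' W n hW' hne' h1 h2
      simp only [a, b]

theorem interval_finset {α : Type*} [DecidableEq α] (V : Finset α) :
    ∃ P : Finset (Finset α × Finset α),
    (∀ p ∈ P, p.1 ⊆ p.2 ∧ p.2 ⊆ V ∧ p.1.Nonempty ∧ (V.card + 1) / 2 ≤ p.2.card) ∧
    ∀ W ⊆ V, W.Nonempty → ∃! p, p ∈ P ∧ p.1 ⊆ W ∧ W ⊆ p.2 := by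
  obtain ⟨P, hP, hU⟩ := interval_range V.card
  let e := V.equivFin
  -- transport along g : V → ℕ
  let g : α → ℕ := fun a => if h : a ∈ V then (e ⟨a, h⟩ : ℕ) else V.card
  have gV : ∀ a ∈ V, g a < V.card := by intro a ha; simp [g, ha]
  have ginj : ∀ a ∈ V, ∀ b ∈ V, g a = g b → a = b := by
    intro a ha b hb h
    simp only [g, ha, hb, dif_pos] at h
    simpa using e.injective (Fin.ext h)
  have gsurj : ∀ m < V.card, ∃ a ∈ V, g a = m := by
    intro m hm
    refine ⟨(e.symm ⟨m, hm⟩ : V), (e.symm ⟨m, hm⟩).2, ?_⟩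
    simp [g]
  let f : Finset ℕ → Finset α := fun A => V.filter fun a => g a ∈ A
  have fmem : ∀ A a, a ∈ f A ↔ a ∈ V ∧ g a ∈ A := by intro A a; simp [f]
  have fimg : ∀ A ⊆ Finset.range V.card, (f A).image g = A := by
    intro A hA
    ext m
    simp only [Finset.mem_image, fmem]
    constructor
    · rintro ⟨a, ⟨_, h⟩, rfl⟩; exact h
    · intro hm
      obtain ⟨a, ha, rfl⟩ := gsurj m (Finset.mem_range.1 (hA hm))
      exact ⟨a, ⟨ha, hm⟩, rfl⟩
  have gf : ∀ W ⊆ V, f (W.image g) = W := by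
    intro W hW
    ext a
    simp only [Finset.mem_image, fmem]
    constructor
    · rintro ⟨ha, b, hb, hab⟩
      rwa [← ginj b (hW hb) a ha hab]
    · intro ha
      exact ⟨hW ha, a, ha, rfl⟩
  have fmono : ∀ A B, A ⊆ B → f A ⊆ f B := by
    intro A B h a ha
    rw [fmem] at *
    exact ⟨ha.1, h ha.2⟩
  refine ⟨P.image fun p => (f p.1, f p.2), ?_, ?_⟩
  · intro p hp
    obtain ⟨q, hq, rfl⟩ := Finset.mem_image.1 hp
    obtain ⟨a, b, c, d⟩ := hP q hq
    refine ⟨fmono _ _ a, Finset.filter_subset _ _, ?_, ?_⟩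
    · rw [← fimg q.1 (a.trans b)] at c
      exact Finset.image_nonempty.1 c
    · refine d.trans ?_
      conv_lhs => rw [← fimg q.2 b]
      exact Finset.card_image_le
  · intro W hW hne
    have hr : W.image g ⊆ Finset.range V.card := by
      intro m hm
      obtain ⟨a, ha, rfl⟩ := Finset.mem_image.1 hm
      exact Finset.mem_range.2 (gV a (hW ha))
    obtain ⟨q, ⟨hq, h1, h2⟩, huq⟩ := hU (W.image g) hr (hne.image g)
    refine ⟨(f q.1, f q.2), ⟨Finset.mem_image_of_mem _ hq, ?_, ?_⟩, ?_⟩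
    · rw [← gf W hW]; exact fmono _ _ h1
    · rw [← gf W hW]; exact fmono _ _ h2
    · rintro p ⟨hp, h3, h4⟩
      obtain ⟨q', hq', rfl⟩ := Finset.mem_image.1 hp
      obtain ⟨a, b, c, d⟩ := hP q' hq'
      have := huq q' ⟨hq', ?_, ?_⟩
      · rw [this]
      · rw [← fimg q'.1 (a.trans b)]; exact Finset.image_subset_image h3
      · rw [← fimg q'.2 b]; exact Finset.image_subset_image h4

theorem stanleySpace_eq {n : ℕ} (K : Type*) [Field K] (A B : Finset (Fin n)) (h : A ⊆ B) :
    stanleySpace K (Finsupp.indicator A fun _ _ => 1) B =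
      restrictSupport K {d : Fin n →₀ ℕ | A ⊆ d.support ∧ d.support ⊆ B} := by
  rw [restrictSupport_eq_span, stanleySpace]
  congr 1
  ext f
  simp only [Set.mem_ofPred_eq, Set.mem_image]
  constructor
  · rintro ⟨e, he, rfl⟩
    refine ⟨_, ⟨?_, ?_⟩, rfl⟩
    · intro i hi
      simp [Finsupp.indicator_apply, hi]
    · intro i hi
      by_cases hA : i ∈ A
      · exact h hA
      · simp [Finsupp.indicator_apply, hA] at hi
        exact he i hi
  · rintro ⟨d, ⟨h1, h2⟩, rfl⟩
    refine ⟨d - Finsupp.indicator A fun _ _ => 1, ?_, ?_⟩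
    · intro i hi
      apply h2
      rw [Finsupp.mem_support_iff]
      intro h0
      simp [h0] at hi
    · congr 2
      ext i
      by_cases hA : i ∈ A
      · have := Finsupp.mem_support_iff.1 (h1 hA)
        simp [Finsupp.indicator_apply, hA]
        omega
      · simp [Finsupp.indicator_apply, hA]

theorem sdepth_ge_of_intervals {n : ℕ} {K : Type*} [Field K]
    (I : Ideal (MvPolynomial (Fin n) K)) (p : Finset (Fin n) → Prop)
    (hI : ∀ f, f ∈ I ↔ ∀ d ∈ f.support, p d.support) (k : ℕ)
    (hne : I ≠ ⊥)
    (P : Finset (Finset (Fin n) × Finset (Fin n)))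
    (hP : ∀ q ∈ P, q.1 ⊆ q.2 ∧ k ≤ q.2.card ∧ ∀ W, q.1 ⊆ W → W ⊆ q.2 → p W)
    (hU : ∀ W, p W → ∃! q, q ∈ P ∧ q.1 ⊆ W ∧ W ⊆ q.2) : k ≤ sdepth I := by
  apply le_csSup
  · refine ⟨n, ?_⟩
    rintro j ⟨D, hD⟩
    rcases Nat.eq_zero_or_pos D.m with h0 | h0
    · exfalso
      apply hne
      have htot := D.total
      have : IsEmpty (Fin D.m) := by rw [h0]; infer_instance
      rw [iSup_of_empty] at htot
      rw [eq_bot_iff]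
      intro x hx
      have h2 : x ∈ Submodule.restrictScalars K I := hx
      rw [← htot] at h2
      simpa using h2
    · exact (hD ⟨0, h0⟩).trans ((Finset.card_le_univ _).trans (by simp))
  · let e := P.equivFin.symm
    let T : Finset (Fin n) × Finset (Fin n) → Set (Fin n →₀ ℕ) := fun q =>
      {d | q.1 ⊆ d.support ∧ d.support ⊆ q.2}
    have hS : ∀ i, stanleySpace K (Finsupp.indicator (e i).1.1 fun _ _ => 1) (e i).1.2 =
        restrictSupport K (T (e i).1) := fun i =>
      stanleySpace_eq K _ _ (hP _ (e i).2).1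
    refine ⟨⟨P.card, fun i => Finsupp.indicator (e i).1.1 fun _ _ => 1, fun i => (e i).1.2,
      ?_, ?_, ?_⟩, ?_⟩
    · intro i
      rw [hI]
      intro d hd
      have := support_monomial_subset hd
      rw [Finset.mem_singleton] at this
      subst this
      have hs : (Finsupp.indicator (e i).1.1 fun _ _ => 1 : Fin n →₀ ℕ).support = (e i).1.1 := by
        ext j; simp [Finsupp.indicator_apply]
      rw [hs]
      exact (hP _ (e i).2).2.2 _ subset_rfl (hP _ (e i).2).1
    · simp only [hS]
      intro i
      rw [Submodule.disjoint_def]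
      intro x hx hx2
      have hle : (⨆ j, ⨆ (_ : j ≠ i), restrictSupport K (T (e j).1)) ≤
          restrictSupport K (⋃ j, ⋃ (_ : j ≠ i), T (e j).1) := by
        refine iSup_le fun j => iSup_le fun hj => restrictSupport_mono K ?_
        exact Set.subset_iUnion₂_of_subset j hj subset_rfl
      have hx3 := hle hx2
      rw [mem_restrictSupport_iff] at hx hx3
      rw [← support_eq_empty, Finset.eq_empty_iff_forall_notMem]
      intro d hd
      have a := hx hd
      have b := hx3 hd
      simp only [Set.mem_iUnion] at b
      obtain ⟨j, hj, b⟩ := b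
      have hp := (hP _ (e i).2).2.2 _ a.1 a.2
      have := (hU _ hp).unique ⟨(e i).2, a⟩ ⟨(e j).2, b⟩
      exact hj (e.injective (Subtype.ext this.symm))
    · simp only [hS]
      apply le_antisymm
      · refine iSup_le fun i => ?_
        intro f hf
        rw [mem_restrictSupport_iff] at hf
        rw [Submodule.restrictScalars_mem, hI]
        intro d hd
        exact (hP _ (e i).2).2.2 _ (hf hd).1 (hf hd).2
      · intro f hf
        rw [Submodule.restrictScalars_mem, hI] at hf
        rw [f.as_sum]
        refine Submodule.sum_mem _ fun d hd => ?_
        obtain ⟨q, ⟨hq, h1, h2⟩, -⟩ := hU _ (hf d hd)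
        refine Submodule.mem_iSup_of_mem (e.symm ⟨q, hq⟩) ?_
        rw [monomial_mem_restrictSupport]
        left
        simp only [Equiv.apply_symm_apply]
        exact ⟨h1, h2⟩
    · intro i
      exact (hP _ (e i).2).2.1

theorem interval_combine {n : ℕ} (r t : ℕ) (h2 : r ≤ t) (h3 : t < n) :
    ∃ P : Finset (Finset (Fin n) × Finset (Fin n)),
    (∀ q ∈ P, q.1 ⊆ q.2 ∧ (r + 1) / 2 + (n - t + 1) / 2 ≤ q.2.card ∧ ∀ W, q.1 ⊆ W → W ⊆ q.2 →
      ((∃ i ∈ W, (i : ℕ) < t) ∧ (∃ i ∈ W, r ≤ (i : ℕ)))) ∧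
    ∀ W : Finset (Fin n), ((∃ i ∈ W, (i : ℕ) < t) ∧ (∃ i ∈ W, r ≤ (i : ℕ))) →
      ∃! q, q ∈ P ∧ q.1 ⊆ W ∧ W ⊆ q.2 := by
  classical
  let R : Finset (Fin n) := Finset.univ.filter fun i => (i : ℕ) < r
  let N : Finset (Fin n) := Finset.univ.filter fun i => t ≤ (i : ℕ)
  let M : Finset (Fin n) := Finset.univ.filter fun i => r ≤ (i : ℕ) ∧ (i : ℕ) < t
  have mR : ∀ i, i ∈ R ↔ (i : ℕ) < r := by simp [R]
  have mN : ∀ i, i ∈ N ↔ t ≤ (i : ℕ) := by simp [N]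
  have mM : ∀ i, i ∈ M ↔ r ≤ (i : ℕ) ∧ (i : ℕ) < t := by simp [M]
  have cR : R.card = r := by
    have : R.map Fin.valEmbedding = Finset.range r := by
      ext x
      simp only [Finset.mem_map, mR, Finset.mem_range, Fin.valEmbedding_apply]
      exact ⟨by rintro ⟨a, h, rfl⟩; exact h, fun h => ⟨⟨x, by omega⟩, h, rfl⟩⟩
    rw [← Finset.card_map Fin.valEmbedding, this, Finset.card_range]
  have cN : N.card = n - t := by
    have : N.map Fin.valEmbedding = Finset.Ico t n := by
      ext x
      simp only [Finset.mem_map, mN, Finset.mem_Ico, Fin.valEmbedding_apply]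
      exact ⟨by rintro ⟨a, h, rfl⟩; exact ⟨h, a.2⟩, fun h => ⟨⟨x, h.2⟩, h.1, rfl⟩⟩
    rw [← Finset.card_map Fin.valEmbedding, this, Nat.card_Ico]
  have dRN : Disjoint R N := by
    rw [Finset.disjoint_left]
    intro i; rw [mR, mN]; omega
  obtain ⟨P1, hP1, hU1⟩ := interval_finset R
  obtain ⟨P2, hP2, hU2⟩ := interval_finset N
  rw [cR] at hP1
  rw [cN] at hP2
  let G : Fin n → Finset (Fin n) := fun j => Finset.univ.filter fun i => i ∉ M ∨ j ≤ i
  have mG : ∀ j i, i ∈ G j ↔ i ∉ M ∨ j ≤ i := by simp [G]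
  let P : Finset (Finset (Fin n) × Finset (Fin n)) :=
    ((P1 ×ˢ P2).image fun q => (q.1.1 ∪ q.2.1, q.1.2 ∪ q.2.2)) ∪ M.image fun j => ({j}, G j)
  have mP : ∀ q, q ∈ P ↔ (∃ a ∈ P1, ∃ b ∈ P2, q = (a.1 ∪ b.1, a.2 ∪ b.2)) ∨
      ∃ j ∈ M, q = ({j}, G j) := by
    intro q
    simp only [P, Finset.mem_union, Finset.mem_image, Finset.mem_product]
    constructor
    · rintro (⟨⟨a, b⟩, ⟨ha, hb⟩, rfl⟩ | ⟨j, hj, rfl⟩)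
      · exact Or.inl ⟨a, ha, b, hb, rfl⟩
      · exact Or.inr ⟨j, hj, rfl⟩
    · rintro (⟨a, ha, b, hb, rfl⟩ | ⟨j, hj, rfl⟩)
      · exact Or.inl ⟨⟨a, b⟩, ⟨ha, hb⟩, rfl⟩
      · exact Or.inr ⟨j, hj, rfl⟩
  refine ⟨P, ?_, ?_⟩
  · intro q hq
    rcases (mP q).1 hq with ⟨a, ha, b, hb, rfl⟩ | ⟨j, hj, rfl⟩
    · obtain ⟨a1, a2, ⟨x, hx⟩, a4⟩ := hP1 a ha
      obtain ⟨b1, b2, ⟨y, hy⟩, b4⟩ := hP2 b hb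
      refine ⟨Finset.union_subset_union a1 b1, ?_, ?_⟩
      · rw [Finset.card_union_of_disjoint (dRN.mono a2 b2)]
        omega
      · intro W hW _
        have e1 := (mR x).1 (a2 (a1 hx))
        have e2 := (mN y).1 (b2 (b1 hy))
        exact ⟨⟨x, hW (Finset.mem_union_left _ hx), by omega⟩,
          ⟨y, hW (Finset.mem_union_right _ hy), by omega⟩⟩
    · have hj' := (mM j).1 hj
      refine ⟨?_, ?_, ?_⟩
      · simp [mG]
      · have : R ∪ N ⊆ G j := by
          intro i hi
          rw [Finset.mem_union, mR, mN] at hi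
          rw [mG, mM]; omega
        have := Finset.card_le_card this
        rw [Finset.card_union_of_disjoint dRN, cR, cN] at this
        refine le_trans ?_ this
        omega
      · intro W hW _
        have hjW : j ∈ W := hW (Finset.mem_singleton_self j)
        exact ⟨⟨j, hjW, hj'.2⟩, ⟨j, hjW, hj'.1⟩⟩
  · rintro W ⟨⟨x, hx, hxt⟩, ⟨y, hy, hyr⟩⟩
    by_cases hM : (W.filter (· ∈ M)).Nonempty
    · let j := (W.filter (· ∈ M)).min' hM
      have hjm := Finset.min'_mem _ hM
      change j ∈ _ at hjm
      rw [Finset.mem_filter] at hjm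
      have hjle : ∀ i ∈ W, i ∈ M → j ≤ i := fun i h h' =>
        Finset.min'_le _ _ (Finset.mem_filter.2 ⟨h, h'⟩)
      refine ⟨({j}, G j), ⟨(mP _).2 (Or.inr ⟨j, hjm.2, rfl⟩), ?_, ?_⟩, ?_⟩
      · simpa using hjm.1
      · intro i hi
        rw [mG]
        by_cases h : i ∈ M
        · exact Or.inr (hjle i hi h)
        · exact Or.inl h
      · rintro q ⟨hq, q1, q2⟩
        rcases (mP q).1 hq with ⟨a, ha, b, hb, rfl⟩ | ⟨j', hj', rfl⟩
        · exfalso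
          have e1 := q2 hjm.1
          have e2 := (mM j).1 hjm.2
          rcases Finset.mem_union.1 e1 with e | e
          · have := (mR j).1 ((hP1 a ha).2.1 e)
            omega
          · have := (mN j).1 ((hP2 b hb).2.1 e)
            omega
        · have e1 := (mG _ _).1 (q2 hjm.1)
          have e2 : j' ≤ j := by
            rcases e1 with e | e
            · exact absurd hjm.2 e
            · exact e
          have e3 := hjle j' (q1 (Finset.mem_singleton_self _)) hj'
          rw [le_antisymm e2 e3]
    · have hno : ∀ i ∈ W, i ∉ M := fun i hi hiM =>
        hM ⟨i, Finset.mem_filter.2 ⟨hi, hiM⟩⟩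
      have hxR : x ∈ W ∩ R := by
        have := hno x hx
        rw [mM] at this
        rw [Finset.mem_inter, mR]; exact ⟨hx, by omega⟩
      have hyN : y ∈ W ∩ N := by
        have := hno y hy
        rw [mM] at this
        rw [Finset.mem_inter, mN]; exact ⟨hy, by omega⟩
      obtain ⟨a, ⟨ha, a1, a2⟩, ua⟩ := hU1 (W ∩ R) Finset.inter_subset_right ⟨x, hxR⟩
      obtain ⟨b, ⟨hb, b1, b2⟩, ub⟩ := hU2 (W ∩ N) Finset.inter_subset_right ⟨y, hyN⟩
      refine ⟨_, ⟨(mP _).2 (Or.inl ⟨a, ha, b, hb, rfl⟩), ?_, ?_⟩, ?_⟩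
      · exact Finset.union_subset (a1.trans Finset.inter_subset_left)
          (b1.trans Finset.inter_subset_left)
      · intro i hi
        have := hno i hi
        rw [mM] at this
        rw [Finset.mem_union]
        by_cases h : (i : ℕ) < r
        · exact Or.inl (a2 (Finset.mem_inter.2 ⟨hi, (mR i).2 h⟩))
        · exact Or.inr (b2 (Finset.mem_inter.2 ⟨hi, (mN i).2 (by omega)⟩))
      · rintro q ⟨hq, q1, q2⟩
        rcases (mP q).1 hq with ⟨c, hc, d, hd, rfl⟩ | ⟨j', hj', rfl⟩
        · obtain ⟨c1, c2, -, -⟩ := hP1 c hc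
          obtain ⟨d1, d2, -, -⟩ := hP2 d hd
          have e1 : c = a := by
            refine ua c ⟨hc, ?_, ?_⟩
            · exact Finset.subset_inter (Finset.union_subset_left q1) (c1.trans c2)
            · intro i hi
              rw [Finset.mem_inter] at hi
              rcases Finset.mem_union.1 (q2 hi.1) with e | e
              · exact e
              · exact absurd (d2 e) (Finset.disjoint_left.1 dRN hi.2)
          have e2 : d = b := by
            refine ub d ⟨hd, ?_, ?_⟩
            · exact Finset.subset_inter (Finset.union_subset_right q1) (d1.trans d2)
            · intro i hi
              rw [Finset.mem_inter] at hi
              rcases Finset.mem_union.1 (q2 hi.1) with e | e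
              · exact absurd hi.2 (Finset.disjoint_left.1 dRN (c2 e))
              · exact e
          rw [e1, e2]
        · exact absurd hj' (hno j' (q1 (Finset.mem_singleton_self _)))

/-- for `Q = (x₁,…,x_t)` and `Q' = (x_{r+1},…,xₙ)` with
`1 ≤ r ≤ t < n`, `sdepth (Q ∩ Q') ≥ ⌈r/2⌉ + ⌈(n−t)/2⌉`. -/
theorem sdepth_overlapping_primes {K : Type*} [Field K] (n r t : ℕ)
    (h1 : 1 ≤ r) (h2 : r ≤ t) (h3 : t < n) :
    sdepth
      ((varIdeal K (Finset.univ.filter fun i : Fin n => (i : ℕ) < t)) ⊓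
        (varIdeal K (Finset.univ.filter fun i : Fin n => r ≤ (i : ℕ)))) ≥
      (r + 1) / 2 + (n - t + 1) / 2 := by
  obtain ⟨P, hP, hU⟩ := interval_combine (n := n) r t h2 h3
  have hmem : ∀ f, f ∈ ((varIdeal K (Finset.univ.filter fun i : Fin n => (i : ℕ) < t)) ⊓
        (varIdeal K (Finset.univ.filter fun i : Fin n => r ≤ (i : ℕ)))) ↔
      ∀ d ∈ f.support, (∃ i ∈ d.support, (i : ℕ) < t) ∧ (∃ i ∈ d.support, r ≤ (i : ℕ)) := by
    intro f
    rw [Ideal.mem_inf]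
    unfold varIdeal
    rw [mem_ideal_span_X_image, mem_ideal_span_X_image, ← forall₂_and]
    refine forall₂_congr fun d _ => ?_
    simp [and_comm]
  refine sdepth_ge_of_intervals _
    (fun W => (∃ i ∈ W, (i : ℕ) < t) ∧ (∃ i ∈ W, r ≤ (i : ℕ))) hmem _ ?_ P hP hU
  intro hbot
  have h0 : monomial (Finsupp.equivFunOnFinite.symm fun _ : Fin n => 1) (1 : K) ∈
      (⊥ : Ideal (MvPolynomial (Fin n) K)) := by
    rw [← hbot, hmem]
    intro d hd
    have := support_monomial_subset hd
    rw [Finset.mem_singleton] at this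
    subst this
    exact ⟨⟨⟨0, by omega⟩, by simp, by simp; omega⟩, ⟨⟨t, h3⟩, by simp, by simpa using h2⟩⟩
  simp at h0
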